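/- For every integer n ≥ 2 there exists D such that for all d ≥ D and every prime power q, Σ_{(A,λ)} q^{dim_{𝔽_q} P^{A,λ}} < q^{binom(d+n,n) − binom(d−⌊d/2⌋+n−1, n) + (n+1)^2 + 1}, where the sum runs over all pairs (A, λ) with A ∈ GL_{n+1}(𝔽_q) not a scalar matrix and λ ∈ 𝔽_q. -/

import Mathlib

/-! The number of pairs `(A, λ)` is less than `q ^ ((n+1)² + 1)`, so it suffices to bound the
dimension of `P^{A,λ}` by `binom(d+n, n) - binom(d-⌊d/2⌋+n-1, n)` for every non-scalar `A`.

Since `A` is not scalar, there is a linear form `ℓ` such that `ℓ` and `ℓ ∘ A` are linearly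
independent. Put `k = ⌊d/2⌋ + 1`. The space `ℓ^k · P_{d-k}` has dimension
`binom(d-⌊d/2⌋+n-1, n)`, and it meets `P^{A,λ}` trivially (`eq_zero_of_subst_eq`): if
`f = ℓ^k g` satisfies `f ∘ A = λ f`, then `ℓ^k` divides `(ℓ ∘ A)^k · (g ∘ A)`; as `ℓ` is prime and
does not divide `ℓ ∘ A`, it follows that `ℓ^k ∣ g ∘ A`, and `g ∘ A = 0` because its degree
`d - k` is less than `k`. -/

open MvPolynomial

/-- Substitution of variables by the linear forms given by the rows of `A`. -/
noncomputable def substMap {F : Type*} [Field F] {n : ℕ}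
    (A : Matrix (Fin (n+1)) (Fin (n+1)) F) :
    MvPolynomial (Fin (n+1)) F →ₗ[F] MvPolynomial (Fin (n+1)) F :=
  (aeval fun k => ∑ l, A k l • X l).toLinearMap

/-- The subspace `P^{A,λ}` of homogeneous degree `d` polynomials with `λ • f = f ∘ A`. -/
noncomputable def Psub (F : Type*) [Field F] (n d : ℕ)
    (A : Matrix (Fin (n+1)) (Fin (n+1)) F) (lam : F) :
    Submodule F (MvPolynomial (Fin (n+1)) F) :=
  homogeneousSubmodule (Fin (n+1)) F d ⊓
    LinearMap.ker (substMap A - lam • LinearMap.id)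

/-- A nonzero homogeneous polynomial is smooth if `f` and its partial derivatives have no
common zero besides the origin over the algebraic closure. -/
def IsSmoothPoly (F : Type*) [Field F] (n : ℕ) (f : MvPolynomial (Fin (n+1)) F) : Prop :=
  ∀ x : Fin (n+1) → AlgebraicClosure F,
    (aeval x f = 0 ∧ ∀ i, aeval x (pderiv i f) = 0) → x = 0

def SmoothSet (F : Type*) [Field F] (n d : ℕ) : Set (MvPolynomial (Fin (n+1)) F) :=
  {f | f ≠ 0 ∧ f.IsHomogeneous d ∧ IsSmoothPoly F n f}

/-- Nonzero polynomials up to scalar: quotient by the `Fˣ`-scaling action. -/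
abbrev HypQuot (F : Type*) [Field F] (n : ℕ) :=
  Quotient (MulAction.orbitRel Fˣ (MvPolynomial (Fin (n+1)) F))

/-- The set `S_{n,d}` of smooth degree `d` hypersurfaces in `ℙⁿ`. -/
def SND (F : Type*) [Field F] (n d : ℕ) : Set (HypQuot F n) :=
  {X | ∃ f ∈ SmoothSet F n d, Quotient.mk _ f = X}

/-- `PGL_{n+1}(F)`. -/
abbrev PGL (F : Type*) [Field F] (n : ℕ) :=
  GL (Fin (n+1)) F ⧸ Subgroup.center (GL (Fin (n+1)) F)

/-- The automorphisms over `F` of the hypersurface cut out by `f`: classes `[A]` in `PGL`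
such that `f ∘ A = λ • f` for some scalar `λ ∈ Fˣ`. -/
def AutSetPoly (F : Type*) [Field F] (n : ℕ) (f : MvPolynomial (Fin (n+1)) F) :
    Set (PGL F n) :=
  {a | ∃ A : GL (Fin (n+1)) F, QuotientGroup.mk A = a ∧
    ∃ c : Fˣ, substMap (A : Matrix (Fin (n+1)) (Fin (n+1)) F) f = (c : F) • f}

/-- The automorphism group of a hypersurface class. -/
def AutClass (F : Type*) [Field F] (n : ℕ) (X : HypQuot F n) : Set (PGL F n) :=
  {a | ∃ f, Quotient.mk _ f = X ∧ a ∈ AutSetPoly F n f}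

theorem finrank_homogeneousSubmodule (F : Type*) [Field F] (n d : ℕ) :
    Module.finrank F (homogeneousSubmodule (Fin (n+1)) F d) = (d + n).choose n := by
  have e : {s : Fin (n+1) →₀ ℕ | s.degree = d} ≃ Sym (Fin (n+1)) d :=
    (Sym.equivNatSum (Fin (n+1)) d).symm
  have : Fintype {s : Fin (n+1) →₀ ℕ | s.degree = d} := Fintype.ofEquiv _ e.symm
  rw [homogeneousSubmodule_eq_finsupp_supported]
  refine (Module.finrank_eq_card_basis
    (basisRestrictSupport F {s : Fin (n+1) →₀ ℕ | s.degree = d})).trans ?_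
  rw [Fintype.card_congr e, Sym.card_sym_eq_choose, Fintype.card_fin]
  have : n + 1 + d - 1 = d + n := by omega
  rw [this, ← Nat.choose_symm_add]

instance finite_homogeneousSubmodule (F : Type*) [Field F] (n d : ℕ) :
    Module.Finite F (homogeneousSubmodule (Fin (n+1)) F d) :=
  Module.Finite.iff_fg.mpr (homogeneousSubmodule_fg _ _ _)

section LinearForms

variable {F : Type*} [Field F] {n : ℕ}

/-- The linear form `∑ v_l X_l` with coefficient vector `v`. -/
noncomputable def linForm (v : Fin (n+1) → F) : MvPolynomial (Fin (n+1)) F :=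
  ∑ l, v l • X l

theorem coeff_linForm (v : Fin (n+1) → F) (i : Fin (n+1)) :
    coeff (Finsupp.single i 1) (linForm v) = v i := by
  classical
  simp [linForm, coeff_sum, coeff_X, Finsupp.single_left_inj]

theorem isHomogeneous_linForm (v : Fin (n+1) → F) : (linForm v).IsHomogeneous 1 := by
  refine IsHomogeneous.sum _ _ _ fun i _ => ?_
  rw [smul_eq_C_mul]
  exact isHomogeneous_C_mul_X _ _

theorem linForm_ne_zero {v : Fin (n+1) → F} (hv : v ≠ 0) : linForm v ≠ 0 := by
  rintro h
  refine hv (funext fun i => ?_)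
  rw [← coeff_linForm v i, h]
  simp

theorem prime_linForm {v : Fin (n+1) → F} (hv : v ≠ 0) : Prime (linForm v) := by
  refine Irreducible.prime (irreducible_of_totalDegree_eq_one
    ((isHomogeneous_linForm v).totalDegree (linForm_ne_zero hv)) fun x hx => ?_)
  obtain ⟨i, hi⟩ := Function.ne_iff.mp hv
  have := hx (Finsupp.single i 1)
  rw [coeff_linForm] at this
  exact isUnit_iff_ne_zero.mpr fun h0 => hi (zero_dvd_iff.mp (h0 ▸ this))

theorem not_linForm_dvd {v w : Fin (n+1) → F} (h : LinearIndependent F ![v, w]) :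
    ¬ linForm v ∣ linForm w := by
  have hv : v ≠ 0 := h.ne_zero 0
  have hw : w ≠ 0 := h.ne_zero 1
  rintro ⟨g, hg⟩
  have hg0 : g ≠ 0 := by
    rintro rfl
    exact linForm_ne_zero hw (by simpa using hg)
  have hdeg := congrArg totalDegree hg
  rw [totalDegree_mul_of_isDomain (linForm_ne_zero hv) hg0,
    (isHomogeneous_linForm v).totalDegree (linForm_ne_zero hv),
    (isHomogeneous_linForm w).totalDegree (linForm_ne_zero hw)] at hdeg
  have hgC := totalDegree_eq_zero_iff_eq_C.mp (show g.totalDegree = 0 by omega)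
  rw [LinearIndependent.pair_iff' hv] at h
  refine h (coeff 0 g) (funext fun i => ?_)
  rw [← coeff_linForm w i, hg, hgC, mul_comm, coeff_C_mul, coeff_linForm]
  simp

theorem substMap_mul (A : Matrix (Fin (n+1)) (Fin (n+1)) F)
    (f g : MvPolynomial (Fin (n+1)) F) :
    substMap A (f * g) = substMap A f * substMap A g := by
  simp [substMap]

theorem substMap_pow (A : Matrix (Fin (n+1)) (Fin (n+1)) F)
    (f : MvPolynomial (Fin (n+1)) F) (k : ℕ) :
    substMap A (f ^ k) = substMap A f ^ k := by
  simp [substMap]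

theorem substMap_linForm (A : Matrix (Fin (n+1)) (Fin (n+1)) F) (v : Fin (n+1) → F) :
    substMap A (linForm v) = linForm (Matrix.vecMul v A) := by
  simp only [substMap, linForm, AlgHom.toLinearMap_apply, map_sum, map_smul, aeval_X,
    Finset.smul_sum, Matrix.vecMul, dotProduct, Finset.sum_smul, smul_smul]
  exact Finset.sum_comm

theorem isHomogeneous_substMap (A : Matrix (Fin (n+1)) (Fin (n+1)) F)
    {f : MvPolynomial (Fin (n+1)) F} {d : ℕ} (hf : f.IsHomogeneous d) :
    (substMap A f).IsHomogeneous d := by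
  have := hf.aeval (fun k => ∑ l, A k l • X l) (n := 1) fun k => isHomogeneous_linForm (A k)
  simpa [substMap] using this

theorem substMap_injective (A : GL (Fin (n+1)) F) :
    Function.Injective (substMap (A : Matrix (Fin (n+1)) (Fin (n+1)) F)) := by
  -- Substitution along `A⁻¹` is a left inverse; it is enough to check this on the variables.
  set φ : MvPolynomial (Fin (n+1)) F →ₐ[F] MvPolynomial (Fin (n+1)) F :=
    aeval fun k => linForm (A.1 k) with hφ
  set ψ : MvPolynomial (Fin (n+1)) F →ₐ[F] MvPolynomial (Fin (n+1)) F :=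
    aeval fun k => linForm ((A⁻¹ : GL (Fin (n+1)) F).1 k) with hψ
  have key : ψ.comp φ = AlgHom.id F _ := by
    refine MvPolynomial.algHom_ext fun k => ?_
    have h1 : ψ (linForm (A.1 k)) = _ := substMap_linForm (A⁻¹ : GL (Fin (n+1)) F).1 (A.1 k)
    have h2 : Matrix.vecMul (A.1 k) (A⁻¹ : GL (Fin (n+1)) F).1 = Pi.single k 1 := by
      rw [← Matrix.mul_apply_eq_vecMul, ← Units.val_mul, mul_inv_cancel]
      funext l
      simp [Matrix.one_apply, Pi.single_apply, eq_comm]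
    have h3 : linForm (Pi.single k (1 : F)) = X k := by
      simp [linForm, Pi.single_apply]
    rw [h2, h3] at h1
    rw [AlgHom.comp_apply, hφ, aeval_X, h1, AlgHom.id_apply]
  have hinj : Function.Injective φ :=
    Function.LeftInverse.injective (g := ψ) fun f => DFunLike.congr_fun key f
  exact hinj

theorem exists_linearIndependent_vecMul (A : Matrix (Fin (n+1)) (Fin (n+1)) F)
    (hA : ¬∃ μ : F, A = μ • (1 : Matrix (Fin (n+1)) (Fin (n+1)) F)) :
    ∃ v : Fin (n+1) → F, LinearIndependent F ![v, Matrix.vecMul v A] := by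
  by_contra! h
  obtain ⟨a, ha⟩ := LinearMap.exists_eq_smul_id_of_forall_notLinearIndependent
    (f := Matrix.toLin' A.transpose) fun v => by
      simpa [Matrix.mulVec_transpose] using h v
  refine hA ⟨a, ?_⟩
  have h2 := congrArg LinearMap.toMatrix' ha
  rw [LinearMap.toMatrix'_toLin', map_smul, LinearMap.toMatrix'_one] at h2
  simpa using congrArg Matrix.transpose h2

/-- The space `ℓ^k · P_m` meets the `λ`-eigenspace of `A` trivially as soon as `m < k`. -/
theorem eq_zero_of_subst_eq (A : GL (Fin (n+1)) F) (lam : F) {v : Fin (n+1) → F}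
    (hv : LinearIndependent F ![v, Matrix.vecMul v A.1]) {k m : ℕ} (hmk : m < k)
    {g : MvPolynomial (Fin (n+1)) F} (hg : g.IsHomogeneous m)
    (h : substMap A.1 (linForm v ^ k * g) = lam • (linForm v ^ k * g)) : g = 0 := by
  have hv0 : v ≠ 0 := hv.ne_zero 0
  rw [substMap_mul, substMap_pow, substMap_linForm] at h
  have hdvd : linForm v ^ k ∣ linForm (Matrix.vecMul v A.1) ^ k * substMap A.1 g := by
    rw [h, smul_eq_C_mul]
    exact dvd_mul_of_dvd_right (dvd_mul_right _ g) _
  have hp := prime_linForm hv0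
  obtain ⟨c, hc⟩ := hp.pow_dvd_of_dvd_mul_left k
    (fun hd => not_linForm_dvd hv (hp.dvd_of_dvd_pow hd)) hdvd
  have hzero : substMap A.1 g = 0 := by
    by_contra hne
    have hc0 : c ≠ 0 := by
      rintro rfl
      exact hne (by simpa using hc)
    have hdeg := congrArg totalDegree hc
    rw [(isHomogeneous_substMap A.1 hg).totalDegree hne,
      totalDegree_mul_of_isDomain (pow_ne_zero _ (linForm_ne_zero hv0)) hc0,
      ((isHomogeneous_linForm v).pow k).totalDegree (pow_ne_zero _ (linForm_ne_zero hv0))] at hdeg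
    omega
  exact substMap_injective A (by rw [hzero, map_zero])

theorem finrank_Psub_le (d : ℕ) (hd : 1 ≤ d) (A : GL (Fin (n+1)) F) (lam : F)
    (hA : ¬∃ μ : F, A.1 = μ • (1 : Matrix (Fin (n+1)) (Fin (n+1)) F)) :
    Module.finrank F (Psub F n d A.1 lam) ≤
      (d + n).choose n - (d - d / 2 + n - 1).choose n := by
  obtain ⟨v, hv⟩ := exists_linearIndependent_vecMul A.1 hA
  set k := d / 2 + 1 with hk
  set m := d - k with hm
  have hkm : k + m = d := by omega
  have hl : linForm v ^ k ≠ 0 := pow_ne_zero _ (linForm_ne_zero (hv.ne_zero 0))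
  let W := (homogeneousSubmodule (Fin (n+1)) F m).map (LinearMap.mulLeft F (linForm v ^ k))
  have hWrank : Module.finrank F W = (d - d / 2 + n - 1).choose n := by
    rw [show d - d / 2 + n - 1 = m + n by omega, ← finrank_homogeneousSubmodule F n m]
    exact (Submodule.equivMapOfInjective (LinearMap.mulLeft F (linForm v ^ k))
      (mul_right_injective₀ hl) _).finrank_eq.symm
  have hWle : W ≤ homogeneousSubmodule (Fin (n+1)) F d := by
    rintro _ ⟨g, hg, rfl⟩
    have := ((isHomogeneous_linForm v).pow k).mul hg
    rwa [one_mul, hkm] at this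
  have hPle : Psub F n d A.1 lam ≤ homogeneousSubmodule (Fin (n+1)) F d := inf_le_left
  have hinf : Psub F n d A.1 lam ⊓ W = ⊥ := by
    rw [eq_bot_iff]
    rintro _ ⟨⟨-, hf⟩, ⟨g, hg, rfl⟩⟩
    have hg0 := eq_zero_of_subst_eq A lam hv (k := k) (m := m) (by omega) hg
      (by simpa [sub_eq_zero] using hf)
    simp [hg0]
  have : Module.Finite F (Psub F n d A.1 lam) := Submodule.finiteDimensional_of_le hPle
  have : Module.Finite F W := Submodule.finiteDimensional_of_le hWle
  have hsum := Submodule.finrank_sup_add_finrank_inf_eq (Psub F n d A.1 lam) W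
  rw [hinf, finrank_bot, hWrank] at hsum
  have hle := Submodule.finrank_mono (sup_le hPle hWle)
  rw [finrank_homogeneousSubmodule] at hle
  omega

end LinearForms

/-- For every `n ≥ 2` there exists `D` such that for all `d ≥ D` and every
finite field `𝔽_q`, the sum of `q^{dim P^{A,λ}}` over all pairs `(A, λ)` with
`A ∈ GL_{n+1}(𝔽_q)` non-scalar and `λ ∈ 𝔽_q` is less than
`q^{binom(d+n,n) - binom(d-⌊d/2⌋+n-1, n) + (n+1)² + 1}`. -/
theorem sum_q_pow_dim_lt (n : ℕ) (hn : 2 ≤ n) :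
    ∃ D : ℕ, ∀ d ≥ D, ∀ (F : Type) [Field F] [Fintype F],
      (∑ᶠ p : {p : GL (Fin (n+1)) F × F //
          ¬∃ μ : F, (p.1 : Matrix (Fin (n+1)) (Fin (n+1)) F) =
            μ • (1 : Matrix (Fin (n+1)) (Fin (n+1)) F)},
        (Fintype.card F) ^
          Module.finrank F
            (Psub F n d (p.val.1 : Matrix (Fin (n+1)) (Fin (n+1)) F) p.val.2)) <
      (Fintype.card F) ^
        ((d + n).choose n - (d - d / 2 + n - 1).choose n + (n + 1) ^ 2 + 1) := by
  refine ⟨1, fun d hd F _ _ => ?_⟩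
  classical
  set S := {p : GL (Fin (n+1)) F × F //
    ¬∃ μ : F, (p.1 : Matrix (Fin (n+1)) (Fin (n+1)) F) =
      μ • (1 : Matrix (Fin (n+1)) (Fin (n+1)) F)}
  set q := Fintype.card F
  have hq : 1 < q := Fintype.one_lt_card
  -- The pair `(0, 0)` is missed by the inclusion of `S` into all pairs (matrix, scalar).
  have hcard : Fintype.card S < q ^ ((n + 1) ^ 2 + 1) := by
    have hlt := Fintype.card_lt_of_injective_of_notMem
      (fun p : S => ((p.1.1 : Matrix (Fin (n+1)) (Fin (n+1)) F), p.1.2))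
      (fun p p' h => by
        obtain ⟨h1, h2⟩ := Prod.mk.inj h
        exact Subtype.ext (Prod.ext (Units.ext h1) h2))
      (b := (0, 0)) (by
        rintro ⟨p, hp⟩
        exact p.2 ⟨0, by rw [zero_smul]; exact (Prod.mk.inj hp).1⟩)
    have hM : Fintype.card (Matrix (Fin (n+1)) (Fin (n+1)) F × F) = q ^ ((n + 1) ^ 2 + 1) := by
      have h := Module.card_eq_pow_finrank (K := F) (V := Matrix (Fin (n+1)) (Fin (n+1)) F)
      rw [Module.finrank_matrix, Module.finrank_self, Fintype.card_fin, mul_one, ← sq] at h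
      rw [Fintype.card_prod, pow_succ, ← h]
    rwa [hM] at hlt
  rw [finsum_eq_sum_of_fintype]
  calc _ ≤ ∑ _p : S, q ^ ((d + n).choose n - (d - d / 2 + n - 1).choose n) :=
        Finset.sum_le_sum fun p _ =>
          Nat.pow_le_pow_right hq.le (finrank_Psub_le d hd p.1.1 p.1.2 p.2)
    _ = q ^ ((d + n).choose n - (d - d / 2 + n - 1).choose n) * Fintype.card S := by
        rw [Finset.sum_const, smul_eq_mul, Finset.card_univ, mul_comm]
    _ < _ := by
        rw [add_assoc, pow_add _ _ ((n + 1) ^ 2 + 1)]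
        exact Nat.mul_lt_mul_of_pos_left hcard (pow_pos (by omega) _)
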